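/- For every integer n ≥ 3, the graph Γ_{C_n} admits a cycle double cover consisting of 3n+2 cycles, namely: for each i ∈ ℤ/nℤ the triangle (a_i,b_i,f_i), the 4-cycle (a_i,f_i,c_i,e_i), and the 7-cycle (e_i,c_i,d_i,d_{i+1},c_{i+1},f_{i+1},b_{i+1}); the n-cycle (d_1,d_2,…,d_n); and the 3n-cycle (b_1,a_1,e_1,b_2,a_2,e_2,…,b_n,a_n,e_n). In particular every edge of Γ_{C_n} lies on exactly two of these cycles. -/

import Mathlib

/-- The graph `Γ_{C_n}` on vertex set `{a,b,c,d,e,f} × (ℤ/nℤ)` (the labels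
`a,b,c,d,e,f` are encoded as `0,1,2,3,4,5 : Fin 6`), with edges, for every `i`:
`{a_i,b_i}, {a_i,e_i}, {a_i,f_i}, {b_i,f_i}, {c_i,d_i}, {c_i,f_i}, {c_i,e_i},
{e_i,b_{i+1}}, {d_i,d_{i+1}}`. -/
def cnGraph (n : ℕ) : SimpleGraph (Fin 6 × ZMod n) :=
  SimpleGraph.fromEdgeSet (⋃ i : ZMod n,
    {s((0, i), (1, i)), s((0, i), (4, i)), s((0, i), (5, i)), s((1, i), (5, i)),
     s((2, i), (3, i)), s((2, i), (5, i)), s((2, i), (4, i)),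
     s((4, i), (1, i + 1)), s((3, i), (3, i + 1))})

/-- The edges of a vertex list regarded as a closed cyclic sequence. -/
def cycleEdges {V : Type*} (l : List V) : List (Sym2 V) :=
  List.zipWith (fun a b => s(a, b)) l (l.rotate 1)

/-- `l` is a cycle of `Γ`: at least three pairwise distinct vertices, any two cyclically
consecutive ones being adjacent in `Γ`. -/
def IsCycleList {V : Type*} (Γ : SimpleGraph V) (l : List V) : Prop :=
  3 ≤ l.length ∧ l.Nodup ∧ ∀ e ∈ cycleEdges l, e ∈ Γ.edgeSet

open scoped Classical in
/-- A cycle double cover: a family of cycles, counted with multiplicity, such that every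
edge of `Γ` lies on exactly two members of the family. -/
def IsCycleDoubleCover {V : Type*} (Γ : SimpleGraph V) (cs : Multiset (List V)) : Prop :=
  (∀ l ∈ cs, IsCycleList Γ l) ∧
  ∀ e ∈ Γ.edgeSet, (cs.map fun l => if e ∈ cycleEdges l then 1 else 0).sum = 2

open scoped Classical in
/-- The explicit cycle double cover of `Γ_{C_n}`: for each `i` the triangle
`(a_i,b_i,f_i)`, the `4`-cycle `(a_i,f_i,c_i,e_i)` and the `7`-cycle
`(e_i,c_i,d_i,d_{i+1},c_{i+1},f_{i+1},b_{i+1})`; the `n`-cycle `(d_1,…,d_n)`; and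
the `3n`-cycle `(b_1,a_1,e_1,b_2,a_2,e_2,…,b_n,a_n,e_n)`. -/
noncomputable def cnCDC (n : ℕ) [NeZero n] : Multiset (List (Fin 6 × ZMod n)) :=
  (Finset.univ : Finset (ZMod n)).val.map
    (fun i => [((0 : Fin 6), i), (1, i), (5, i)]) +
  (Finset.univ : Finset (ZMod n)).val.map
    (fun i => [((0 : Fin 6), i), (5, i), (2, i), (4, i)]) +
  (Finset.univ : Finset (ZMod n)).val.map
    (fun i => [((4 : Fin 6), i), (2, i), (3, i), (3, i + 1), (2, i + 1), (5, i + 1),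
      (1, i + 1)]) +
  {(List.range n).map fun k => ((3 : Fin 6), (k : ZMod n)),
   (List.range n).flatMap fun k =>
     [((1 : Fin 6), (k : ZMod n)), (0, (k : ZMod n)), (4, (k : ZMod n))]}

theorem cn_mem_cycleEdges {V : Type*} (l : List V) (e : Sym2 V) :
    e ∈ cycleEdges l ↔ ∃ k, ∃ h : k < l.length,
      e = s(l[k], l[(k + 1) % l.length]'(Nat.mod_lt _ (by omega))) := by
  unfold cycleEdges
  rw [List.mem_iff_getElem]
  constructor
  · rintro ⟨k, hk, rfl⟩
    have hk' : k < l.length := by simpa using hk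
    exact ⟨k, hk', by simp [List.getElem_rotate]⟩
  · rintro ⟨k, hk, rfl⟩
    exact ⟨k, by simpa using hk, by simp [List.getElem_rotate]⟩

theorem cn_flat {V : Type*} (g : ℕ → V) (n : ℕ) :
    (List.range n).flatMap (fun k => [g (3 * k), g (3 * k + 1), g (3 * k + 2)]) =
      (List.range (3 * n)).map g := by
  induction n with
  | zero => simp
  | succ n ih =>
    rw [List.range_succ, List.flatMap_append, ih]
    simp [Nat.mul_succ, List.range_succ]

/-- vertex number `k` of the long cycle -/
def cnG (n k : ℕ) : Fin 6 × ZMod n :=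
  (if k % 3 = 0 then 1 else if k % 3 = 1 then 0 else 4, ((k / 3 : ℕ) : ZMod n))

theorem cnG0 (n k : ℕ) : cnG n (3 * k) = (1, (k : ZMod n)) := by
  simp [cnG]

theorem cnG1 (n k : ℕ) : cnG n (3 * k + 1) = (0, (k : ZMod n)) := by
  have h1 : (3 * k + 1) % 3 = 1 := by omega
  have h2 : (3 * k + 1) / 3 = k := by omega
  simp [cnG, h1, h2]

theorem cnG2 (n k : ℕ) : cnG n (3 * k + 2) = (4, (k : ZMod n)) := by
  have h1 : (3 * k + 2) % 3 = 2 := by omega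
  have h2 : (3 * k + 2) / 3 = k := by omega
  simp [cnG, h1, h2]

theorem cn_long (n : ℕ) : ((List.range n).flatMap fun k : ℕ =>
     [((1 : Fin 6), (k : ZMod n)), (0, (k : ZMod n)), (4, (k : ZMod n))]) =
     (List.range (3 * n)).map (cnG n) := by
  rw [← cn_flat]
  simp only [cnG0, cnG1, cnG2]

theorem cn_mem_d (n : ℕ) [NeZero n] (e : Sym2 (Fin 6 × ZMod n)) :
    e ∈ cycleEdges ((List.range n).map fun k : ℕ => ((3 : Fin 6), (k : ZMod n))) ↔
      ∃ j : ZMod n, e = s((3, j), (3, j + 1)) := by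
  rw [cn_mem_cycleEdges]
  constructor
  · rintro ⟨k, hk, rfl⟩
    exact ⟨k, by simp⟩
  · rintro ⟨j, rfl⟩
    exact ⟨j.val, by simpa using j.val_lt, by simp⟩

theorem cn_mem_long (n : ℕ) [NeZero n] (e : Sym2 (Fin 6 × ZMod n)) :
    e ∈ cycleEdges ((List.range (3 * n)).map (cnG n)) ↔
      ∃ j : ZMod n, e = s((1, j), (0, j)) ∨ e = s((0, j), (4, j)) ∨
        e = s((4, j), (1, j + 1)) := by
  have hn : 0 < n := Nat.pos_of_ne_zero (NeZero.ne n)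
  have key : ∀ q, q < n → cnG n ((3 * q + 2 + 1) % (3 * n)) = (1, (q : ZMod n) + 1) := by
    intro q hq
    have : (3 * q + 2 + 1) % (3 * n) = 3 * ((q + 1) % n) := by
      rw [← Nat.mul_mod_mul_left]; rfl
    rw [this, cnG0]; simp
  rw [cn_mem_cycleEdges]
  constructor
  · rintro ⟨k, hk, rfl⟩
    simp only [List.length_map, List.length_range] at hk
    simp only [List.length_map, List.length_range, List.getElem_map, List.getElem_range]
    obtain ⟨q, hq⟩ : ∃ q, k = 3 * q ∨ k = 3 * q + 1 ∨ k = 3 * q + 2 := ⟨k / 3, by omega⟩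
    refine ⟨q, ?_⟩
    rcases hq with rfl | rfl | rfl
    · left; rw [Nat.mod_eq_of_lt (by omega), cnG0, cnG1]
    · right; left; rw [Nat.mod_eq_of_lt (by omega), cnG1, cnG2]
    · right; right; rw [key q (by omega), cnG2]
  · rintro ⟨j, h⟩
    have hj := j.val_lt
    have hc : ((j.val : ℕ) : ZMod n) = j := by simp
    simp only [List.length_map, List.length_range, List.getElem_map, List.getElem_range]
    rcases h with rfl | rfl | rfl
    · refine ⟨3 * j.val, by omega, ?_⟩
      rw [Nat.mod_eq_of_lt (by omega), cnG0, cnG1, hc]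
    · refine ⟨3 * j.val + 1, by omega, ?_⟩
      rw [Nat.mod_eq_of_lt (by omega), cnG1, cnG2, hc]
    · refine ⟨3 * j.val + 2, by omega, ?_⟩
      rw [key _ hj, cnG2, hc]

theorem cn_cast_inj (n : ℕ) {a b : ℕ} (ha : a < n) (hb : b < n)
    (h : (a : ZMod n) = b) : a = b := by
  rw [ZMod.natCast_eq_natCast_iff'] at h
  rwa [Nat.mod_eq_of_lt ha, Nat.mod_eq_of_lt hb] at h

theorem cn_nodup_d (n : ℕ) :
    ((List.range n).map fun k : ℕ => ((3 : Fin 6), (k : ZMod n))).Nodup := by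
  apply List.Nodup.map_on _ List.nodup_range
  intro x hx y hy h
  simp only [List.mem_range] at hx hy
  exact cn_cast_inj n hx hy (Prod.ext_iff.1 h).2

theorem cn_nodup_long (n : ℕ) : ((List.range (3 * n)).map (cnG n)).Nodup := by
  apply List.Nodup.map_on _ List.nodup_range
  intro x hx y hy h
  simp only [List.mem_range] at hx hy
  have h2 := cn_cast_inj n (by omega) (by omega) (Prod.ext_iff.1 h).2
  have h1 := (Prod.ext_iff.1 h).1
  simp only [cnG] at h1
  split_ifs at h1 <;> omega

theorem cn_ne1 (n : ℕ) (hn : 3 ≤ n) : (1 : ZMod n) ≠ 0 := by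
  intro h
  have := cn_cast_inj n (a := 1) (b := 0) (by omega) (by omega) (by simpa using h)
  omega

theorem cn_ne2 (n : ℕ) (hn : 3 ≤ n) : (1 + 1 : ZMod n) ≠ 0 := by
  intro h
  have := cn_cast_inj n (a := 2) (b := 0) (by omega) (by omega)
    (by push_cast; rw [← one_add_one_eq_two]; exact h)
  omega

theorem cn_mem_edge (n : ℕ) (hn : 3 ≤ n) (e : Sym2 (Fin 6 × ZMod n)) :
    e ∈ (cnGraph n).edgeSet ↔ ∃ i : ZMod n,
     e = s((0, i), (1, i)) ∨ e = s((0, i), (4, i)) ∨ e = s((0, i), (5, i)) ∨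
     e = s((1, i), (5, i)) ∨
     e = s((2, i), (3, i)) ∨ e = s((2, i), (5, i)) ∨ e = s((2, i), (4, i)) ∨
     e = s((4, i), (1, i + 1)) ∨ e = s((3, i), (3, i + 1)) := by
  have h1 := cn_ne1 n hn
  unfold cnGraph
  rw [SimpleGraph.edgeSet_fromEdgeSet]
  simp only [Set.mem_sdiff, Set.mem_iUnion, Set.mem_insert_iff, Set.mem_singleton_iff]
  constructor
  · rintro ⟨h, -⟩; exact h
  · intro h
    refine ⟨h, ?_⟩
    obtain ⟨i, h⟩ := h
    rcases h with rfl | rfl | rfl | rfl | rfl | rfl | rfl | rfl | rfl <;> simp [h1]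

theorem cn_lift (n : ℕ) : (do let a ← List.range n; pure (a : ZMod n)) =
    (List.range n).map (fun a : ℕ => (a : ZMod n)) := by
  induction List.range n <;> simp_all

theorem cnCDC_eq (n : ℕ) [NeZero n] : cnCDC n =
  (Finset.univ : Finset (ZMod n)).val.map
    (fun i => [((0 : Fin 6), i), (1, i), (5, i)]) +
  (Finset.univ : Finset (ZMod n)).val.map
    (fun i => [((0 : Fin 6), i), (5, i), (2, i), (4, i)]) +
  (Finset.univ : Finset (ZMod n)).val.map
    (fun i => [((4 : Fin 6), i), (2, i), (3, i), (3, i + 1), (2, i + 1), (5, i + 1),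
      (1, i + 1)]) +
  {(List.range n).map fun k : ℕ => ((3 : Fin 6), (k : ZMod n)),
   (List.range n).flatMap fun k : ℕ =>
     [((1 : Fin 6), (k : ZMod n)), (0, (k : ZMod n)), (4, (k : ZMod n))]} := by
  unfold cnCDC
  rw [cn_lift, List.map_map, List.flatMap_map]
  rfl

/-- For `n ≥ 3`, the family `cnCDC n` of `3n+2` explicit cycles is a cycle double cover
of `Γ_{C_n}`: every edge lies on exactly two of these cycles. -/
theorem cnCDC_isCycleDoubleCover (n : ℕ) [NeZero n] (hn : 3 ≤ n) :
    IsCycleDoubleCover (cnGraph n) (cnCDC n) ∧ Multiset.card (cnCDC n) = 3 * n + 2 := by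
  classical
  have h1 := cn_ne1 n hn
  have h2 := cn_ne2 n hn
  refine ⟨⟨?_, ?_⟩, ?_⟩
  · intro l hl
    simp only [cnCDC_eq, cn_long, Multiset.mem_add, Multiset.mem_map, Multiset.insert_eq_cons,
      Multiset.mem_cons, Multiset.mem_singleton] at hl
    rcases hl with ((⟨i, -, rfl⟩ | ⟨i, -, rfl⟩) | ⟨i, -, rfl⟩) | rfl | rfl
    · refine ⟨by simp, by simp, ?_⟩
      intro e he
      rw [cn_mem_edge n hn]
      simp [cycleEdges] at he
      refine ⟨i, ?_⟩
      rcases he with rfl | rfl | rfl <;> simp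
    · refine ⟨by simp, by simp, ?_⟩
      intro e he
      rw [cn_mem_edge n hn]
      simp [cycleEdges] at he
      refine ⟨i, ?_⟩
      rcases he with rfl | rfl | rfl | rfl <;> simp
    · refine ⟨by simp, by simp [h1], ?_⟩
      intro e he
      rw [cn_mem_edge n hn]
      simp [cycleEdges] at he
      rcases he with rfl | rfl | rfl | rfl | rfl | rfl | rfl
      · exact ⟨i, by simp⟩
      · exact ⟨i, by simp⟩
      · exact ⟨i, by simp⟩
      · exact ⟨i + 1, by simp⟩
      · exact ⟨i + 1, by simp⟩
      · exact ⟨i + 1, by simp⟩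
      · exact ⟨i, by simp⟩
    · refine ⟨by simpa using hn, cn_nodup_d n, ?_⟩
      intro e he
      rw [cn_mem_edge n hn]
      obtain ⟨j, rfl⟩ := (cn_mem_d n e).1 he
      exact ⟨j, by simp⟩
    · refine ⟨by simp; omega, cn_nodup_long n, ?_⟩
      intro e he
      rw [cn_mem_edge n hn]
      obtain ⟨j, rfl | rfl | rfl⟩ := (cn_mem_long n e).1 he <;> exact ⟨j, by simp⟩
  · intro e he
    simp only [cnCDC_eq, cn_long, Multiset.map_add, Multiset.sum_add, Multiset.insert_eq_cons,
      Multiset.map_cons, Multiset.map_singleton, Multiset.sum_cons, Multiset.sum_singleton,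
      cn_mem_d, cn_mem_long, Multiset.map_map, Function.comp_def]
    change (∑ j, _) + (∑ j, _) + (∑ j, _) + _ = 2
    obtain ⟨i, h⟩ := (cn_mem_edge n hn e).1 he
    have e1 : ∀ j : ZMod n, (i = j + 1 ∧ i + 1 = j) ↔ False := by
      intro j; simp only [iff_false]; rintro ⟨h, h'⟩
      apply h2; rw [h] at h'; rw [add_assoc] at h'; simpa using h'
    have e2 : ∀ j : ZMod n, (i = j ∨ i = j + 1) ↔ (j = i ∨ j = i - 1) := by
      intro j; rw [eq_comm, eq_sub_iff_add_eq, @eq_comm _ i (j + 1)]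
    have e3 : (Finset.univ.filter fun j : ZMod n => j = i ∨ j = i - 1).card = 2 := by
      have : (Finset.univ.filter fun j : ZMod n => j = i ∨ j = i - 1) = {i, i - 1} := by
        ext; simp
      rw [this, Finset.card_pair]
      intro h; apply h1; simpa using h.symm
    have e4 : (Finset.univ.filter fun j : ZMod n => i = j + 1).card = 1 := by
      have : (Finset.univ.filter fun j : ZMod n => i = j + 1) = {i - 1} := by
        ext j; simp [eq_sub_iff_add_eq, eq_comm]
      rw [this, Finset.card_singleton]
    rcases h with rfl | rfl | rfl | rfl | rfl | rfl | rfl | rfl | rfl <;>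
      simp [cycleEdges, e1, e2, e3, e4]
  · simp [cnCDC, ZMod.card]
    ring
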